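/- The CG-to-FG translation never produces the right injection at translated monadic type: Suppose · ⊢ e_s : CG ℓ1 ℓ2 τ ⇝ e_t for a closed CG expression e_s. If the FG application e_t (), evaluated under FG's big-step semantics from the empty heap, terminates with value v, then v = inl(v') for some value v'; the case v = inr() never occurs. -/

import Mathlib

/-!
The proof is a type-safety argument for a small label-free type system on FG expressions.

Besides the usual simple types, the system has a type `opt a` of sums which only ever carry a
left injection: `inl e` has type `opt a` when `e` has type `a`, no rule gives `inr e` a type
`opt a`, and a `case` on a scrutinee of type `opt a` imposes no condition on its right branch.
The labels of a CG type are erased, with `Labeled ℓ τ` sent to `opt τ`, `CG ℓ1 ℓ2 τ` to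
`unit → opt τ`, and `ref ℓ τ` to references with content `opt τ`. CG subtyping relates only types
which agree up to labels, so it becomes equality after erasure (`CGSub.erase_eq`), and every
translated expression is typable at the erased type (`CG2FG.hasType`); in particular the
`inr ()` branch in the translation of `bind` is harmless, since it is never inspected.

Big-step evaluation preserves typing, up to an extension of the store typing
(`FGEval.preservation`). Thus the result of running `e_t ()` is a value of type `opt τ`, and
such a value is a left injection.
-/

/-! ## Shared expression syntax for the FG and CG calculi (de Bruijn indices) -/

inductive Exp : Type where
  | var (n : ℕ)
  | lam (e : Exp)
  | app (e1 e2 : Exp)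
  | pair (e1 e2 : Exp)
  | fst (e : Exp)
  | snd (e : Exp)
  | inl (e : Exp)
  | inr (e : Exp)
  | case (e e1 e2 : Exp)      -- the two branches each bind one variable
  | tt
  | ff
  | unit
  | loc (n : ℕ)
  | new (e : Exp)
  | deref (e : Exp)
  | assign (e1 e2 : Exp)
  | label (e : Exp)
  | unlabel (e : Exp)
  | toLabeled (e : Exp)
  | ret (e : Exp)
  | bind (e1 e2 : Exp)        -- e2 binds one variable
deriving DecidableEq

namespace Exp

/-- Shift free de Bruijn indices `≥ c` up by one. -/
def shift (c : ℕ) : Exp → Exp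
  | var n => if n < c then var n else var (n + 1)
  | lam e => lam (e.shift (c + 1))
  | app e1 e2 => app (e1.shift c) (e2.shift c)
  | pair e1 e2 => pair (e1.shift c) (e2.shift c)
  | fst e => fst (e.shift c)
  | snd e => snd (e.shift c)
  | inl e => inl (e.shift c)
  | inr e => inr (e.shift c)
  | case e e1 e2 => case (e.shift c) (e1.shift (c + 1)) (e2.shift (c + 1))
  | tt => tt
  | ff => ff
  | unit => unit
  | loc n => loc n
  | new e => new (e.shift c)
  | deref e => deref (e.shift c)
  | assign e1 e2 => assign (e1.shift c) (e2.shift c)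
  | label e => label (e.shift c)
  | unlabel e => unlabel (e.shift c)
  | toLabeled e => toLabeled (e.shift c)
  | ret e => ret (e.shift c)
  | bind e1 e2 => bind (e1.shift c) (e2.shift (c + 1))

/-- Substitution `e[v/k]` of `v` for de Bruijn index `k` in `e`. -/
def subst : Exp → Exp → ℕ → Exp
  | var n, v, k => if n = k then v else if k < n then var (n - 1) else var n
  | lam e, v, k => lam (e.subst (v.shift 0) (k + 1))
  | app e1 e2, v, k => app (e1.subst v k) (e2.subst v k)
  | pair e1 e2, v, k => pair (e1.subst v k) (e2.subst v k)
  | fst e, v, k => fst (e.subst v k)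
  | snd e, v, k => snd (e.subst v k)
  | inl e, v, k => inl (e.subst v k)
  | inr e, v, k => inr (e.subst v k)
  | case e e1 e2, v, k =>
      case (e.subst v k) (e1.subst (v.shift 0) (k + 1)) (e2.subst (v.shift 0) (k + 1))
  | tt, _, _ => tt
  | ff, _, _ => ff
  | unit, _, _ => unit
  | loc n, _, _ => loc n
  | new e, v, k => new (e.subst v k)
  | deref e, v, k => deref (e.subst v k)
  | assign e1 e2, v, k => assign (e1.subst v k) (e2.subst v k)
  | label e, v, k => label (e.subst v k)
  | unlabel e, v, k => unlabel (e.subst v k)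
  | toLabeled e, v, k => toLabeled (e.subst v k)
  | ret e, v, k => ret (e.subst v k)
  | bind e1 e2, v, k => bind (e1.subst v k) (e2.subst (v.shift 0) (k + 1))

end Exp

/-- Heaps: locations are list indices; allocation appends. -/
abbrev Heap := List Exp

/-! ## Values -/

/-- Values of the FG language. -/
inductive FGVal : Exp → Prop where
  | lam : FGVal (.lam e)
  | pair : FGVal v1 → FGVal v2 → FGVal (.pair v1 v2)
  | inl : FGVal v → FGVal (.inl v)
  | inr : FGVal v → FGVal (.inr v)
  | tt : FGVal .tt
  | ff : FGVal .ff
  | unit : FGVal .unit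
  | loc : FGVal (.loc n)

/-- Values of the CG language (monadic expressions are suspended computations,
hence values; labeled values are values). -/
inductive CGVal : Exp → Prop where
  | lam : CGVal (.lam e)
  | pair : CGVal v1 → CGVal v2 → CGVal (.pair v1 v2)
  | inl : CGVal v → CGVal (.inl v)
  | inr : CGVal v → CGVal (.inr v)
  | tt : CGVal .tt
  | ff : CGVal .ff
  | unit : CGVal .unit
  | loc : CGVal (.loc n)
  | label : CGVal v → CGVal (.label v)
  | ret : CGVal (.ret e)
  | bind : CGVal (.bind e1 e2)
  | unlabel : CGVal (.unlabel e)
  | toLabeled : CGVal (.toLabeled e)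
  | new : CGVal (.new e)
  | deref : CGVal (.deref e)
  | assign : CGVal (.assign e1 e2)

/-! ## FG: deterministic big-step call-by-value evaluation over heaps -/

inductive FGEval : Heap → Exp → Heap → Exp → Prop where
  | lam : FGEval h (.lam e) h (.lam e)
  | tt : FGEval h .tt h .tt
  | ff : FGEval h .ff h .ff
  | unit : FGEval h .unit h .unit
  | loc : FGEval h (.loc n) h (.loc n)
  | app : FGEval h e1 h1 (.lam e) → FGEval h1 e2 h2 v2 →
      FGEval h2 (e.subst v2 0) h3 v → FGEval h (.app e1 e2) h3 v
  | pair : FGEval h e1 h1 v1 → FGEval h1 e2 h2 v2 →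
      FGEval h (.pair e1 e2) h2 (.pair v1 v2)
  | fst : FGEval h e h1 (.pair v1 v2) → FGEval h (.fst e) h1 v1
  | snd : FGEval h e h1 (.pair v1 v2) → FGEval h (.snd e) h1 v2
  | inl : FGEval h e h1 v → FGEval h (.inl e) h1 (.inl v)
  | inr : FGEval h e h1 v → FGEval h (.inr e) h1 (.inr v)
  | caseL : FGEval h e h1 (.inl v) → FGEval h1 (e1.subst v 0) h2 w →
      FGEval h (.case e e1 e2) h2 w
  | caseR : FGEval h e h1 (.inr v) → FGEval h1 (e2.subst v 0) h2 w →
      FGEval h (.case e e1 e2) h2 w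
  | new : FGEval h e h1 v → FGEval h (.new e) (h1 ++ [v]) (.loc h1.length)
  | deref : FGEval h e h1 (.loc n) → h1[n]? = some v → FGEval h (.deref e) h1 v
  | assign : FGEval h e1 h1 (.loc n) → FGEval h1 e2 h2 v →
      FGEval h (.assign e1 e2) (h2.set n v) .unit

/-! ## CG: pure big-step evaluation (no heap) and forcing semantics over heaps -/

/-- Pure (heap-free) big-step evaluation for CG.  Monadic expressions are
suspended computations and evaluate to themselves. -/
inductive CGPure : Exp → Exp → Prop where
  | lam : CGPure (.lam e) (.lam e)
  | tt : CGPure .tt .tt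
  | ff : CGPure .ff .ff
  | unit : CGPure .unit .unit
  | loc : CGPure (.loc n) (.loc n)
  | app : CGPure e1 (.lam e) → CGPure e2 v2 → CGPure (e.subst v2 0) v →
      CGPure (.app e1 e2) v
  | pair : CGPure e1 v1 → CGPure e2 v2 → CGPure (.pair e1 e2) (.pair v1 v2)
  | fst : CGPure e (.pair v1 v2) → CGPure (.fst e) v1
  | snd : CGPure e (.pair v1 v2) → CGPure (.snd e) v2
  | inl : CGPure e v → CGPure (.inl e) (.inl v)
  | inr : CGPure e v → CGPure (.inr e) (.inr v)
  | caseL : CGPure e (.inl v) → CGPure (e1.subst v 0) w → CGPure (.case e e1 e2) w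
  | caseR : CGPure e (.inr v) → CGPure (e2.subst v 0) w → CGPure (.case e e1 e2) w
  | label : CGPure e v → CGPure (.label e) (.label v)
  | ret : CGPure (.ret e) (.ret e)
  | bind : CGPure (.bind e1 e2) (.bind e1 e2)
  | unlabel : CGPure (.unlabel e) (.unlabel e)
  | toLabeled : CGPure (.toLabeled e) (.toLabeled e)
  | new : CGPure (.new e) (.new e)
  | deref : CGPure (.deref e) (.deref e)
  | assign : CGPure (.assign e1 e2) (.assign e1 e2)

/-- Forcing semantics for CG's monadic computations: actually performs heap
reads, writes and allocations. -/
inductive CGForce : Heap → Exp → Heap → Exp → Prop where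
  | ret : CGPure e (.ret e0) → CGPure e0 v → CGForce h e h v
  | bind : CGPure e (.bind e1 e2) → CGForce h e1 h1 v1 →
      CGForce h1 (e2.subst v1 0) h2 v → CGForce h e h2 v
  | unlabel : CGPure e (.unlabel e0) → CGPure e0 (.label v) → CGForce h e h v
  | toLabeled : CGPure e (.toLabeled e0) → CGForce h e0 h1 v →
      CGForce h e h1 (.label v)
  | new : CGPure e (.new e0) → CGPure e0 v → CGForce h e (h ++ [v]) (.loc h.length)
  | deref : CGPure e (.deref e0) → CGPure e0 (.loc n) → h[n]? = some v →
      CGForce h e h v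
  | assign : CGPure e (.assign e1 e2) → CGPure e1 (.loc n) → CGPure e2 v →
      CGForce h e (h.set n v) .unit

/-! ## FG types (every type constructor carries its outer security label) -/

inductive FGTy (L : Type) : Type where
  | bool (l : L)
  | unit (l : L)
  | fn (t1 : FGTy L) (le : L) (t2 : FGTy L) (l : L)
  | prod (t1 t2 : FGTy L) (l : L)
  | sum (t1 t2 : FGTy L) (l : L)
  | ref (t : FGTy L) (l : L)

/-- The outer label of an FG type (`(A^ℓ).lab = ℓ`).
`τ.lab ≥ ℓ` is the protection judgment `τ ↘ ℓ`. -/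
def FGTy.lab {L : Type} : FGTy L → L
  | .bool l => l
  | .unit l => l
  | .fn _ _ _ l => l
  | .prod _ _ l => l
  | .sum _ _ l => l
  | .ref _ l => l

/-- FG subtyping: structural, covariant in security labels, contravariant in
the pc-label of function types, invariant in the content type of references. -/
inductive FGSub {L : Type} [Lattice L] [BoundedOrder L] : FGTy L → FGTy L → Prop where
  | bool : l ≤ l' → FGSub (.bool l) (.bool l')
  | unit : l ≤ l' → FGSub (.unit l) (.unit l')
  | fn : FGSub τ1' τ1 → le' ≤ le → FGSub τ2 τ2' → l ≤ l' →
      FGSub (.fn τ1 le τ2 l) (.fn τ1' le' τ2' l')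
  | prod : FGSub τ1 τ1' → FGSub τ2 τ2' → l ≤ l' →
      FGSub (.prod τ1 τ2 l) (.prod τ1' τ2' l')
  | sum : FGSub τ1 τ1' → FGSub τ2 τ2' → l ≤ l' →
      FGSub (.sum τ1 τ2 l) (.sum τ1' τ2' l')
  | ref : l ≤ l' → FGSub (.ref τ l) (.ref τ l')

/-- The FG typing judgment `Γ ⊢_pc e : τ`. -/
inductive FGTyped {L : Type} [Lattice L] [BoundedOrder L] :
    List (FGTy L) → L → Exp → FGTy L → Prop where
  | var : Γ[n]? = some τ → FGTyped Γ pc (.var n) τ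
  | tt : FGTyped Γ pc .tt (.bool ⊥)
  | ff : FGTyped Γ pc .ff (.bool ⊥)
  | unit : FGTyped Γ pc .unit (.unit ⊥)
  | lam : FGTyped (τ1 :: Γ) le e τ2 → FGTyped Γ pc (.lam e) (.fn τ1 le τ2 ⊥)
  | app : FGTyped Γ pc e1 (.fn τ1 le τ2 l) → FGTyped Γ pc e2 τ1 →
      l ⊔ pc ≤ le → l ≤ τ2.lab → FGTyped Γ pc (.app e1 e2) τ2
  | pair : FGTyped Γ pc e1 τ1 → FGTyped Γ pc e2 τ2 →
      FGTyped Γ pc (.pair e1 e2) (.prod τ1 τ2 ⊥)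
  | fst : FGTyped Γ pc e (.prod τ1 τ2 l) → l ≤ τ1.lab → FGTyped Γ pc (.fst e) τ1
  | snd : FGTyped Γ pc e (.prod τ1 τ2 l) → l ≤ τ2.lab → FGTyped Γ pc (.snd e) τ2
  | inl : FGTyped Γ pc e τ1 → FGTyped Γ pc (.inl e) (.sum τ1 τ2 ⊥)
  | inr : FGTyped Γ pc e τ2 → FGTyped Γ pc (.inr e) (.sum τ1 τ2 ⊥)
  | case : FGTyped Γ pc e (.sum τ1 τ2 l) → FGTyped (τ1 :: Γ) (pc ⊔ l) e1 τ →
      FGTyped (τ2 :: Γ) (pc ⊔ l) e2 τ → l ≤ τ.lab →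
      FGTyped Γ pc (.case e e1 e2) τ
  | new : FGTyped Γ pc e τ → pc ≤ τ.lab → FGTyped Γ pc (.new e) (.ref τ ⊥)
  | deref : FGTyped Γ pc e (.ref τ l) → FGSub τ τ' → l ≤ τ'.lab →
      FGTyped Γ pc (.deref e) τ'
  | assign : FGTyped Γ pc e1 (.ref τ l) → FGTyped Γ pc e2 τ →
      pc ⊔ l ≤ τ.lab → FGTyped Γ pc (.assign e1 e2) (.unit ⊥)
  | sub : FGTyped Γ pc' e τ' → FGSub τ' τ → pc ≤ pc' → FGTyped Γ pc e τ

/-! ## CG types -/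

inductive CGTy (L : Type) : Type where
  | bool
  | unit
  | fn (t1 t2 : CGTy L)
  | prod (t1 t2 : CGTy L)
  | sum (t1 t2 : CGTy L)
  | ref (l : L) (t : CGTy L)
  | labeled (l : L) (t : CGTy L)
  | monad (l1 l2 : L) (t : CGTy L)   -- CG ℓ1 ℓ2 τ : pc-label ℓ1, taint label ℓ2

/-- CG subtyping: `Labeled ℓ τ` covariant in `ℓ` and `τ`; `CG ℓ1 ℓ2 τ`
contravariant in `ℓ1`, covariant in `ℓ2` and `τ`. -/
inductive CGSub {L : Type} [Lattice L] [BoundedOrder L] : CGTy L → CGTy L → Prop where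
  | bool : CGSub .bool .bool
  | unit : CGSub .unit .unit
  | fn : CGSub τ1' τ1 → CGSub τ2 τ2' → CGSub (.fn τ1 τ2) (.fn τ1' τ2')
  | prod : CGSub τ1 τ1' → CGSub τ2 τ2' → CGSub (.prod τ1 τ2) (.prod τ1' τ2')
  | sum : CGSub τ1 τ1' → CGSub τ2 τ2' → CGSub (.sum τ1 τ2) (.sum τ1' τ2')
  | ref : CGSub (.ref l τ) (.ref l τ)
  | labeled : CGSub τ τ' → l ≤ l' → CGSub (.labeled l τ) (.labeled l' τ')
  | monad : l1' ≤ l1 → l2 ≤ l2' → CGSub τ τ' →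
      CGSub (.monad l1 l2 τ) (.monad l1' l2' τ')

/-- The CG typing judgment `Γ ⊢ e : τ`. -/
inductive CGTyped {L : Type} [Lattice L] [BoundedOrder L] :
    List (CGTy L) → Exp → CGTy L → Prop where
  | var : Γ[n]? = some τ → CGTyped Γ (.var n) τ
  | tt : CGTyped Γ .tt .bool
  | ff : CGTyped Γ .ff .bool
  | unit : CGTyped Γ .unit .unit
  | lam : CGTyped (τ1 :: Γ) e τ2 → CGTyped Γ (.lam e) (.fn τ1 τ2)
  | app : CGTyped Γ e1 (.fn τ1 τ2) → CGTyped Γ e2 τ1 → CGTyped Γ (.app e1 e2) τ2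
  | pair : CGTyped Γ e1 τ1 → CGTyped Γ e2 τ2 → CGTyped Γ (.pair e1 e2) (.prod τ1 τ2)
  | fst : CGTyped Γ e (.prod τ1 τ2) → CGTyped Γ (.fst e) τ1
  | snd : CGTyped Γ e (.prod τ1 τ2) → CGTyped Γ (.snd e) τ2
  | inl : CGTyped Γ e τ1 → CGTyped Γ (.inl e) (.sum τ1 τ2)
  | inr : CGTyped Γ e τ2 → CGTyped Γ (.inr e) (.sum τ1 τ2)
  | case : CGTyped Γ e (.sum τ1 τ2) → CGTyped (τ1 :: Γ) e1 τ →
      CGTyped (τ2 :: Γ) e2 τ → CGTyped Γ (.case e e1 e2) τ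
  | ret : CGTyped Γ e τ → CGTyped Γ (.ret e) (.monad ⊤ ⊥ τ)
  | bind : CGTyped Γ e1 (.monad l1 l2 τ) → CGTyped (τ :: Γ) e2 (.monad l3 l4 τ') →
      l ≤ l1 → l ≤ l3 → l2 ≤ l3 → l2 ≤ l4 →
      CGTyped Γ (.bind e1 e2) (.monad l l4 τ')
  | label : CGTyped Γ e τ → CGTyped Γ (.label e) (.labeled l τ)
  | unlabel : CGTyped Γ e (.labeled l τ) → CGTyped Γ (.unlabel e) (.monad ⊤ l τ)
  | new : CGTyped Γ e (.labeled l τ) → CGTyped Γ (.new e) (.monad l ⊥ (.ref l τ))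
  | deref : CGTyped Γ e (.ref l' τ) → CGTyped Γ (.deref e) (.monad ⊤ ⊥ (.labeled l' τ))
  | assign : CGTyped Γ e1 (.ref l τ) → CGTyped Γ e2 (.labeled l τ) →
      CGTyped Γ (.assign e1 e2) (.monad l ⊥ .unit)
  | toLabeled : CGTyped Γ e (.monad l l' τ) →
      CGTyped Γ (.toLabeled e) (.monad l ⊥ (.labeled l' τ))
  | sub : CGTyped Γ e τ' → CGSub τ' τ → CGTyped Γ e τ

/-! ## The CG-to-FG type translation ⟦·⟧ -/

def toFG {L : Type} [Lattice L] [BoundedOrder L] : CGTy L → FGTy L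
  | .bool => .bool ⊥
  | .unit => .unit ⊥
  | .fn τ1 τ2 => .fn (toFG τ1) ⊤ (toFG τ2) ⊥
  | .prod τ1 τ2 => .prod (toFG τ1) (toFG τ2) ⊥
  | .sum τ1 τ2 => .sum (toFG τ1) (toFG τ2) ⊥
  | .ref l τ => .ref (.sum (toFG τ) (.unit ⊥) l) ⊥
  | .labeled l τ => .sum (toFG τ) (.unit ⊥) l
  | .monad l1 l2 τ => .fn (.unit ⊥) l1 (.sum (toFG τ) (.unit ⊥) l2) ⊥

/-! ## The FG-to-CG type translation: ⟦A^ℓ⟧ = Labeled ℓ ⟨A⟩ -/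

/-- `⟨A⟩`: translation of the unlabeled part of an FG type. -/
def trA {L : Type} [Lattice L] [BoundedOrder L] : FGTy L → CGTy L
  | .bool _ => .bool
  | .unit _ => .unit
  | .fn τ1 le τ2 _ =>
      .fn (.labeled τ1.lab (trA τ1)) (.monad le ⊥ (.labeled τ2.lab (trA τ2)))
  | .prod τ1 τ2 _ => .prod (.labeled τ1.lab (trA τ1)) (.labeled τ2.lab (trA τ2))
  | .sum τ1 τ2 _ => .sum (.labeled τ1.lab (trA τ1)) (.labeled τ2.lab (trA τ2))
  | .ref τ _ => .ref τ.lab (trA τ)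

/-- `⟦A^ℓ⟧ = Labeled ℓ ⟨A⟩`. -/
def toCG {L : Type} [Lattice L] [BoundedOrder L] (τ : FGTy L) : CGTy L :=
  .labeled τ.lab (trA τ)

/-! ## CG-to-FG expression translation `Γ ⊢ e : τ ⇝ e_F` -/

inductive CG2FG {L : Type} [Lattice L] [BoundedOrder L] :
    List (CGTy L) → Exp → CGTy L → Exp → Prop where
  | var : Γ[n]? = some τ → CG2FG Γ (.var n) τ (.var n)
  | tt : CG2FG Γ .tt .bool .tt
  | ff : CG2FG Γ .ff .bool .ff
  | unit : CG2FG Γ .unit .unit .unit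
  | lam : CG2FG (τ1 :: Γ) e τ2 eF → CG2FG Γ (.lam e) (.fn τ1 τ2) (.lam eF)
  | app : CG2FG Γ e1 (.fn τ1 τ2) eF1 → CG2FG Γ e2 τ1 eF2 →
      CG2FG Γ (.app e1 e2) τ2 (.app eF1 eF2)
  | pair : CG2FG Γ e1 τ1 eF1 → CG2FG Γ e2 τ2 eF2 →
      CG2FG Γ (.pair e1 e2) (.prod τ1 τ2) (.pair eF1 eF2)
  | fst : CG2FG Γ e (.prod τ1 τ2) eF → CG2FG Γ (.fst e) τ1 (.fst eF)
  | snd : CG2FG Γ e (.prod τ1 τ2) eF → CG2FG Γ (.snd e) τ2 (.snd eF)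
  | inl : CG2FG Γ e τ1 eF → CG2FG Γ (.inl e) (.sum τ1 τ2) (.inl eF)
  | inr : CG2FG Γ e τ2 eF → CG2FG Γ (.inr e) (.sum τ1 τ2) (.inr eF)
  | case : CG2FG Γ e (.sum τ1 τ2) eF → CG2FG (τ1 :: Γ) e1 τ eF1 →
      CG2FG (τ2 :: Γ) e2 τ eF2 → CG2FG Γ (.case e e1 e2) τ (.case eF eF1 eF2)
  | label : CG2FG Γ e τ eF → CG2FG Γ (.label e) (.labeled l τ) (.inl eF)
  | unlabel : CG2FG Γ e (.labeled l τ) eF →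
      CG2FG Γ (.unlabel e) (.monad ⊤ l τ) (.lam (eF.shift 0))
  | toLabeled : CG2FG Γ e (.monad l1 l2 τ) eF →
      CG2FG Γ (.toLabeled e) (.monad l1 ⊥ (.labeled l2 τ))
        (.lam (.inl (.app (eF.shift 0) .unit)))
  | ret : CG2FG Γ e τ eF → CG2FG Γ (.ret e) (.monad ⊤ ⊥ τ) (.lam (.inl (eF.shift 0)))
  | bind : CG2FG Γ e1 (.monad l1 l2 τ) eF1 →
      CG2FG (τ :: Γ) e2 (.monad l3 l4 τ') eF2 →
      l ≤ l1 → l ≤ l3 → l2 ≤ l3 → l2 ≤ l4 →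
      CG2FG Γ (.bind e1 e2) (.monad l l4 τ')
        (.lam (.case (.app (eF1.shift 0) .unit) (.app (eF2.shift 1) .unit)
          (.inr .unit)))
  | new : CG2FG Γ e (.labeled l τ) eF →
      CG2FG Γ (.new e) (.monad l ⊥ (.ref l τ)) (.lam (.inl (.new (eF.shift 0))))
  | deref : CG2FG Γ e (.ref l' τ) eF →
      CG2FG Γ (.deref e) (.monad ⊤ ⊥ (.labeled l' τ))
        (.lam (.inl (.deref (eF.shift 0))))
  | assign : CG2FG Γ e1 (.ref l τ) eF1 → CG2FG Γ e2 (.labeled l τ) eF2 →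
      CG2FG Γ (.assign e1 e2) (.monad l ⊥ .unit)
        (.lam (.inl (.assign (eF1.shift 0) (eF2.shift 0))))
  | sub : CG2FG Γ e τ' eF → CGSub τ' τ → CG2FG Γ e τ eF

/-! ## FG-to-CG expression translation `Γ ⊢_pc e : τ ⇝ e_c` -/

/-- `coerce_taint ≜ λx. toLabeled(bind(x, y. unlabel y))`. -/
def coerceTaint : Exp := .lam (.toLabeled (.bind (.var 0) (.unlabel (.var 0))))

inductive FG2CG {L : Type} [Lattice L] [BoundedOrder L] :
    List (FGTy L) → L → Exp → FGTy L → Exp → Prop where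
  | var : Γ[n]? = some τ → FG2CG Γ pc (.var n) τ (.ret (.var n))
  | tt : FG2CG Γ pc .tt (.bool ⊥) (.ret (.label .tt))
  | ff : FG2CG Γ pc .ff (.bool ⊥) (.ret (.label .ff))
  | unit : FG2CG Γ pc .unit (.unit ⊥) (.ret (.label .unit))
  | lam : FG2CG (τ1 :: Γ) le e τ2 ec →
      FG2CG Γ pc (.lam e) (.fn τ1 le τ2 ⊥) (.ret (.label (.lam ec)))
  | app : FG2CG Γ pc e1 (.fn τ1 le τ2 l) ec1 → FG2CG Γ pc e2 τ1 ec2 →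
      l ⊔ pc ≤ le → l ≤ τ2.lab →
      FG2CG Γ pc (.app e1 e2) τ2
        (.app coerceTaint
          (.bind ec1 (.bind (ec2.shift 0)
            (.bind (.unlabel (.var 1)) (.app (.var 0) (.var 1))))))
  | pair : FG2CG Γ pc e1 τ1 ec1 → FG2CG Γ pc e2 τ2 ec2 →
      FG2CG Γ pc (.pair e1 e2) (.prod τ1 τ2 ⊥)
        (.bind ec1 (.bind (ec2.shift 0) (.ret (.label (.pair (.var 1) (.var 0))))))
  | fst : FG2CG Γ pc e (.prod τ1 τ2 l) ec → l ≤ τ1.lab →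
      FG2CG Γ pc (.fst e) τ1
        (.app coerceTaint
          (.bind ec (.bind (.unlabel (.var 0)) (.ret (.fst (.var 0))))))
  | snd : FG2CG Γ pc e (.prod τ1 τ2 l) ec → l ≤ τ2.lab →
      FG2CG Γ pc (.snd e) τ2
        (.app coerceTaint
          (.bind ec (.bind (.unlabel (.var 0)) (.ret (.snd (.var 0))))))
  | inl : FG2CG Γ pc e τ1 ec →
      FG2CG Γ pc (.inl e) (.sum τ1 τ2 ⊥) (.bind ec (.ret (.label (.inl (.var 0)))))
  | inr : FG2CG Γ pc e τ2 ec →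
      FG2CG Γ pc (.inr e) (.sum τ1 τ2 ⊥) (.bind ec (.ret (.label (.inr (.var 0)))))
  | case : FG2CG Γ pc e (.sum τ1 τ2 l) ec →
      FG2CG (τ1 :: Γ) (pc ⊔ l) e1 τ ec1 → FG2CG (τ2 :: Γ) (pc ⊔ l) e2 τ ec2 →
      l ≤ τ.lab →
      FG2CG Γ pc (.case e e1 e2) τ
        (.app coerceTaint
          (.bind ec (.bind (.unlabel (.var 0))
            (.case (.var 0) ((ec1.shift 1).shift 1) ((ec2.shift 1).shift 1)))))
  | new : FG2CG Γ pc e τ ec → pc ≤ τ.lab →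
      FG2CG Γ pc (.new e) (.ref τ ⊥)
        (.bind ec (.bind (.new (.var 0)) (.ret (.label (.var 0)))))
  | deref : FG2CG Γ pc e (.ref τ l) ec → FGSub τ τ' → l ≤ τ'.lab →
      FG2CG Γ pc (.deref e) τ'
        (.app coerceTaint
          (.bind ec (.bind (.unlabel (.var 0)) (.deref (.var 0)))))
  | assign : FG2CG Γ pc e1 (.ref τ l) ec1 → FG2CG Γ pc e2 τ ec2 →
      pc ⊔ l ≤ τ.lab →
      FG2CG Γ pc (.assign e1 e2) (.unit ⊥)
        (.bind (.toLabeled (.bind ec1 (.bind (ec2.shift 0)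
          (.bind (.unlabel (.var 1)) (.assign (.var 0) (.var 1))))))
          (.ret (.label .unit)))
  | sub : FG2CG Γ pc' e τ' ec → FGSub τ' τ → pc ≤ pc' → FG2CG Γ pc e τ ec

/-! ### A label-free type system for FG expressions -/

/-- Simple types without security labels. `opt a` is the type of sums whose right branch
is never reached. -/
inductive STy : Type where
  | bool
  | unit
  | fn (a b : STy)
  | prod (a b : STy)
  | sum (a b : STy)
  | ref (a : STy)
  | opt (a : STy)

/-- The label-erasing translation of CG types. -/
def CGTy.erase {L : Type} : CGTy L → STy
  | .bool => .bool
  | .unit => .unit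
  | .fn t1 t2 => .fn t1.erase t2.erase
  | .prod t1 t2 => .prod t1.erase t2.erase
  | .sum t1 t2 => .sum t1.erase t2.erase
  | .ref _ t => .ref (.opt t.erase)
  | .labeled _ t => .opt t.erase
  | .monad _ _ t => .fn .unit (.opt t.erase)

theorem CGSub.erase_eq {L : Type} [Lattice L] [BoundedOrder L] {t t' : CGTy L}
    (hs : CGSub t t') : t.erase = t'.erase := by
  induction hs <;> simp_all [CGTy.erase]

/-- The simple type system for FG expressions, with store typing `S` (the type of the content of
each location) and context `Γ`. An expression `inl e` may be typed at a sum or at `opt`; a `case`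
on an `opt` scrutinee leaves its right branch unconstrained. -/
inductive HasType (S : List STy) : List STy → Exp → STy → Prop where
  | var {Γ n a} : Γ[n]? = some a → HasType S Γ (.var n) a
  | tt {Γ} : HasType S Γ .tt .bool
  | ff {Γ} : HasType S Γ .ff .bool
  | unit {Γ} : HasType S Γ .unit .unit
  | loc {Γ n a} : S[n]? = some a → HasType S Γ (.loc n) (.ref a)
  | lam {Γ e a b} : HasType S (a :: Γ) e b → HasType S Γ (.lam e) (.fn a b)
  | app {Γ e1 e2 a b} : HasType S Γ e1 (.fn a b) → HasType S Γ e2 a →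
      HasType S Γ (.app e1 e2) b
  | pair {Γ e1 e2 a b} : HasType S Γ e1 a → HasType S Γ e2 b →
      HasType S Γ (.pair e1 e2) (.prod a b)
  | fst {Γ e a b} : HasType S Γ e (.prod a b) → HasType S Γ (.fst e) a
  | snd {Γ e a b} : HasType S Γ e (.prod a b) → HasType S Γ (.snd e) b
  | inl {Γ e a b} : HasType S Γ e a → HasType S Γ (.inl e) (.sum a b)
  | inr {Γ e a b} : HasType S Γ e b → HasType S Γ (.inr e) (.sum a b)
  | inlOpt {Γ e a} : HasType S Γ e a → HasType S Γ (.inl e) (.opt a)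
  | case {Γ e e1 e2 a b c} : HasType S Γ e (.sum a b) → HasType S (a :: Γ) e1 c →
      HasType S (b :: Γ) e2 c → HasType S Γ (.case e e1 e2) c
  | caseOpt {Γ e e1 e2 a c} : HasType S Γ e (.opt a) → HasType S (a :: Γ) e1 c →
      HasType S Γ (.case e e1 e2) c
  | new {Γ e a} : HasType S Γ e a → HasType S Γ (.new e) (.ref a)
  | deref {Γ e a} : HasType S Γ e (.ref a) → HasType S Γ (.deref e) a
  | assign {Γ e1 e2 a} : HasType S Γ e1 (.ref a) → HasType S Γ e2 a →
      HasType S Γ (.assign e1 e2) .unit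

/-! ### Weakening and substitution -/

theorem List.IsPrefix.getElem?_some {α : Type} {l l' : List α} (hl : l <+: l') {n : ℕ} {a : α}
    (ha : l[n]? = some a) : l'[n]? = some a := by
  obtain ⟨t, rfl⟩ := hl
  obtain ⟨hn, rfl⟩ := List.getElem?_eq_some_iff.1 ha
  simp [List.getElem?_append_left hn]

/-- Typing is monotone in the store typing. -/
theorem HasType.store_mono {S S' Γ : List STy} {e : Exp} {a : STy} (ht : HasType S Γ e a)
    (hS : S <+: S') : HasType S' Γ e a := by
  induction ht with
  | loc hl => exact .loc (List.IsPrefix.getElem?_some hS hl)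
  | var hn => exact .var hn
  | inlOpt _ ih => exact .inlOpt ih
  | caseOpt _ _ ih1 ih2 => exact .caseOpt ih1 ih2
  | _ => constructor <;> assumption

/-- Weakening along an arbitrary renaming of the context that agrees with `shift c`. -/
theorem HasType.shift {S Γ : List STy} {e : Exp} {a : STy} (ht : HasType S Γ e a) :
    ∀ (c : ℕ) (Γ' : List STy),
      (∀ n b, Γ[n]? = some b → Γ'[if n < c then n else n + 1]? = some b) →
      HasType S Γ' (e.shift c) a := by
  have lift : ∀ (c : ℕ) (Γ Γ' : List STy) (d : STy),
      (∀ n b, Γ[n]? = some b → Γ'[if n < c then n else n + 1]? = some b) →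
      ∀ n b, (d :: Γ)[n]? = some b →
        (d :: Γ')[if n < c + 1 then n else n + 1]? = some b := by
    intro c Γ Γ' d hr n b hn
    cases n with
    | zero => simpa using hn
    | succ n =>
      have := hr n b (by simpa using hn)
      by_cases h : n < c <;> simpa [h] using this
  induction ht with
  | var hn =>
    intro c Γ' hr
    have := hr _ _ hn
    simp only [Exp.shift]
    split_ifs at this ⊢ <;> exact .var this
  | tt => intros; exact .tt
  | ff => intros; exact .ff
  | unit => intros; exact .unit
  | loc hl => intros; exact .loc hl
  | lam _ ih => intro c Γ' hr; exact .lam (ih _ _ (lift _ _ _ _ hr))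
  | app _ _ ih1 ih2 => intro c Γ' hr; exact .app (ih1 _ _ hr) (ih2 _ _ hr)
  | pair _ _ ih1 ih2 => intro c Γ' hr; exact .pair (ih1 _ _ hr) (ih2 _ _ hr)
  | fst _ ih => intro c Γ' hr; exact .fst (ih _ _ hr)
  | snd _ ih => intro c Γ' hr; exact .snd (ih _ _ hr)
  | inl _ ih => intro c Γ' hr; exact .inl (ih _ _ hr)
  | inr _ ih => intro c Γ' hr; exact .inr (ih _ _ hr)
  | inlOpt _ ih => intro c Γ' hr; exact .inlOpt (ih _ _ hr)
  | case _ _ _ ih ih1 ih2 =>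
    intro c Γ' hr
    exact .case (ih _ _ hr) (ih1 _ _ (lift _ _ _ _ hr)) (ih2 _ _ (lift _ _ _ _ hr))
  | caseOpt _ _ ih ih1 =>
    intro c Γ' hr
    exact .caseOpt (ih _ _ hr) (ih1 _ _ (lift _ _ _ _ hr))
  | new _ ih => intro c Γ' hr; exact .new (ih _ _ hr)
  | deref _ ih => intro c Γ' hr; exact .deref (ih _ _ hr)
  | assign _ _ ih1 ih2 => intro c Γ' hr; exact .assign (ih1 _ _ hr) (ih2 _ _ hr)

theorem HasType.shift_zero {S Γ : List STy} {e : Exp} {a : STy} (ht : HasType S Γ e a)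
    (d : STy) : HasType S (d :: Γ) (e.shift 0) a :=
  ht.shift 0 _ (by simp)

theorem HasType.shift_one {S Γ : List STy} {e : Exp} {a d : STy} (ht : HasType S (d :: Γ) e a)
    (d' : STy) : HasType S (d :: d' :: Γ) (e.shift 1) a :=
  ht.shift 1 _ (by rintro (_ | n) b hn <;> simpa using hn)

/-- Substitution lemma, for contexts `Γ`, `Γ'` such that the substitution of `v` for the index `k`
sends each variable of `Γ` to an expression of the same type over `Γ'`. -/
theorem HasType.subst_of_var {S Γ : List STy} {e : Exp} {a : STy} (ht : HasType S Γ e a) :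
    ∀ (v : Exp) (k : ℕ) (Γ' : List STy),
      (∀ n b, Γ[n]? = some b → HasType S Γ' ((Exp.var n).subst v k) b) →
      HasType S Γ' (e.subst v k) a := by
  have lift : ∀ (v : Exp) (k : ℕ) (Γ Γ' : List STy) (d : STy),
      (∀ n b, Γ[n]? = some b → HasType S Γ' ((Exp.var n).subst v k) b) →
      ∀ n b, (d :: Γ)[n]? = some b →
        HasType S (d :: Γ') ((Exp.var n).subst (v.shift 0) (k + 1)) b := by
    intro v k Γ Γ' d hr n b hn
    cases n with
    | zero =>
      simpa [Exp.subst] using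
        HasType.var (S := S) (Γ := d :: Γ') (n := 0) (by simpa using hn)
    | succ n =>
      have key : (Exp.var (n + 1)).subst (v.shift 0) (k + 1)
          = ((Exp.var n).subst v k).shift 0 := by
        rcases lt_trichotomy n k with h | h | h
        · simp [Exp.subst, Exp.shift, h.ne, h.not_gt]
        · simp [Exp.subst, h]
        · simp [Exp.subst, Exp.shift, h.ne', h]
          omega
      rw [key]
      exact (hr n b (by simpa using hn)).shift_zero d
  induction ht with
  | var hn => intro v k Γ' hr; exact hr _ _ hn
  | tt => intros; exact .tt
  | ff => intros; exact .ff
  | unit => intros; exact .unit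
  | loc hl => intros; exact .loc hl
  | lam _ ih => intro v k Γ' hr; exact .lam (ih _ _ _ (lift _ _ _ _ _ hr))
  | app _ _ ih1 ih2 => intro v k Γ' hr; exact .app (ih1 _ _ _ hr) (ih2 _ _ _ hr)
  | pair _ _ ih1 ih2 => intro v k Γ' hr; exact .pair (ih1 _ _ _ hr) (ih2 _ _ _ hr)
  | fst _ ih => intro v k Γ' hr; exact .fst (ih _ _ _ hr)
  | snd _ ih => intro v k Γ' hr; exact .snd (ih _ _ _ hr)
  | inl _ ih => intro v k Γ' hr; exact .inl (ih _ _ _ hr)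
  | inr _ ih => intro v k Γ' hr; exact .inr (ih _ _ _ hr)
  | inlOpt _ ih => intro v k Γ' hr; exact .inlOpt (ih _ _ _ hr)
  | case _ _ _ ih ih1 ih2 =>
    intro v k Γ' hr
    exact .case (ih _ _ _ hr) (ih1 _ _ _ (lift _ _ _ _ _ hr)) (ih2 _ _ _ (lift _ _ _ _ _ hr))
  | caseOpt _ _ ih ih1 =>
    intro v k Γ' hr
    exact .caseOpt (ih _ _ _ hr) (ih1 _ _ _ (lift _ _ _ _ _ hr))
  | new _ ih => intro v k Γ' hr; exact .new (ih _ _ _ hr)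
  | deref _ ih => intro v k Γ' hr; exact .deref (ih _ _ _ hr)
  | assign _ _ ih1 ih2 => intro v k Γ' hr; exact .assign (ih1 _ _ _ hr) (ih2 _ _ _ hr)

theorem HasType.subst_zero {S : List STy} {e v : Exp} {a b : STy}
    (ht : HasType S [b] e a) (hv : HasType S [] v b) : HasType S [] (e.subst v 0) a := by
  refine ht.subst_of_var v 0 [] ?_
  rintro (_ | n) c hn
  · obtain rfl : b = c := by simpa using hn
    simpa [Exp.subst] using hv
  · simp at hn

/-! ### Typability of translated expressions -/

/-- Translated expressions are typable at the erased type, over any store typing. -/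
theorem CG2FG.hasType {L : Type} [Lattice L] [BoundedOrder L] {Γ : List (CGTy L)} {e eF : Exp}
    {t : CGTy L} (htr : CG2FG Γ e t eF) (S : List STy) :
    HasType S (Γ.map CGTy.erase) eF t.erase := by
  induction htr with
  | var hn => exact .var (by simp [hn])
  | tt => exact .tt
  | ff => exact .ff
  | unit => exact .unit
  | lam _ ih => exact .lam ih
  | app _ _ ih1 ih2 => exact .app ih1 ih2
  | pair _ _ ih1 ih2 => exact .pair ih1 ih2
  | fst _ ih => exact .fst ih
  | snd _ ih => exact .snd ih
  | inl _ ih => exact .inl ih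
  | inr _ ih => exact .inr ih
  | case _ _ _ ih ih1 ih2 => exact .case ih ih1 ih2
  | label _ ih => exact .inlOpt ih
  | unlabel _ ih => exact .lam (ih.shift_zero _)
  | toLabeled _ ih => exact .lam (.inlOpt (.app (ih.shift_zero _) .unit))
  | ret _ ih => exact .lam (.inlOpt (ih.shift_zero _))
  | bind _ _ _ _ _ _ ih1 ih2 =>
    exact .lam (.caseOpt (.app (ih1.shift_zero _) .unit) (.app (ih2.shift_one _) .unit))
  | new _ ih => exact .lam (.inlOpt (.new (ih.shift_zero _)))
  | deref _ ih => exact .lam (.inlOpt (.deref (ih.shift_zero _)))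
  | assign _ _ ih1 ih2 =>
    exact .lam (.inlOpt (.assign (ih1.shift_zero _) (ih2.shift_zero _)))
  | sub _ hs ih => exact hs.erase_eq ▸ ih

/-! ### Type preservation -/

/-- The heap `h` consists of closed values whose types are given by `S`. -/
def HeapTyped (S : List STy) (h : Heap) : Prop :=
  List.Forall₂ (fun a v => FGVal v ∧ HasType S [] v a) S h

theorem HeapTyped.get {S : List STy} {h : Heap} (hh : HeapTyped S h) {n : ℕ} {a : STy} {v : Exp}
    (ha : S[n]? = some a) (hv : h[n]? = some v) : FGVal v ∧ HasType S [] v a := by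
  obtain ⟨h1, rfl⟩ := List.getElem?_eq_some_iff.1 ha
  obtain ⟨h2, rfl⟩ := List.getElem?_eq_some_iff.1 hv
  exact List.Forall₂.get hh h1 h2

theorem HeapTyped.append {S : List STy} {h : Heap} (hh : HeapTyped S h) {a : STy} {v : Exp}
    (hv : FGVal v) (ht : HasType S [] v a) : HeapTyped (S ++ [a]) (h ++ [v]) := by
  have hS : S <+: S ++ [a] := List.prefix_append _ _
  exact List.rel_append (hh.imp fun _ _ hx => ⟨hx.1, hx.2.store_mono hS⟩)
    (.cons ⟨hv, ht.store_mono hS⟩ .nil)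

theorem HeapTyped.set {S : List STy} {h : Heap} (hh : HeapTyped S h) {n : ℕ} {a : STy} {v : Exp}
    (ha : S[n]? = some a) (hv : FGVal v) (ht : HasType S [] v a) : HeapTyped S (h.set n v) := by
  refine List.forall₂_iff_get.2 ⟨by simpa using List.Forall₂.length_eq hh, fun i h1 h2 => ?_⟩
  by_cases hi : n = i
  · subst hi
    obtain ⟨_, rfl⟩ := List.getElem?_eq_some_iff.1 ha
    simpa using ⟨hv, ht⟩
  · have h2' : i < h.length := by simpa using h2
    simpa [List.getElem_set_of_ne hi] using List.Forall₂.get hh h1 h2'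

/-- Type preservation for big-step evaluation: the result is a value of the same type, with respect
to an extended store typing which accounts for the newly allocated locations. -/
theorem FGEval.preservation {h h' : Heap} {e v : Exp} (hev : FGEval h e h' v) :
    ∀ (S : List STy) (a : STy), HeapTyped S h → HasType S [] e a →
      ∃ S', S <+: S' ∧ HeapTyped S' h' ∧ FGVal v ∧ HasType S' [] v a := by
  induction hev with
  | lam => intro S a hh ht; exact ⟨S, List.prefix_rfl, hh, .lam, ht⟩
  | tt => intro S a hh ht; exact ⟨S, List.prefix_rfl, hh, .tt, ht⟩
  | ff => intro S a hh ht; exact ⟨S, List.prefix_rfl, hh, .ff, ht⟩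
  | unit => intro S a hh ht; exact ⟨S, List.prefix_rfl, hh, .unit, ht⟩
  | loc => intro S a hh ht; exact ⟨S, List.prefix_rfl, hh, .loc, ht⟩
  | app _ _ _ ih1 ih2 ih3 =>
    intro S a hh ht
    cases ht with
    | app ht1 ht2 =>
      obtain ⟨S1, hS1, hh1, -, hl⟩ := ih1 _ _ hh ht1
      obtain ⟨S2, hS2, hh2, -, hv2⟩ := ih2 _ _ hh1 (ht2.store_mono hS1)
      cases hl with
      | lam hb =>
        obtain ⟨S3, hS3, hr⟩ := ih3 _ _ hh2 ((hb.store_mono hS2).subst_zero hv2)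
        exact ⟨S3, (hS1.trans hS2).trans hS3, hr⟩
  | pair _ _ ih1 ih2 =>
    intro S a hh ht
    cases ht with
    | pair ht1 ht2 =>
      obtain ⟨S1, hS1, hh1, hv1, hl⟩ := ih1 _ _ hh ht1
      obtain ⟨S2, hS2, hh2, hv2, hr⟩ := ih2 _ _ hh1 (ht2.store_mono hS1)
      exact ⟨S2, hS1.trans hS2, hh2, .pair hv1 hv2, .pair (hl.store_mono hS2) hr⟩
  | fst _ ih =>
    intro S a hh ht
    cases ht with
    | fst ht =>
      obtain ⟨S1, hS1, hh1, hv, hp⟩ := ih _ _ hh ht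
      cases hv with
      | pair hv1 hv2 => cases hp with
        | pair hp1 hp2 => exact ⟨S1, hS1, hh1, hv1, hp1⟩
  | snd _ ih =>
    intro S a hh ht
    cases ht with
    | snd ht =>
      obtain ⟨S1, hS1, hh1, hv, hp⟩ := ih _ _ hh ht
      cases hv with
      | pair hv1 hv2 => cases hp with
        | pair hp1 hp2 => exact ⟨S1, hS1, hh1, hv2, hp2⟩
  | inl _ ih =>
    intro S a hh ht
    cases ht with
    | inl ht =>
      obtain ⟨S1, hS1, hh1, hv, hp⟩ := ih _ _ hh ht
      exact ⟨S1, hS1, hh1, .inl hv, .inl hp⟩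
    | inlOpt ht =>
      obtain ⟨S1, hS1, hh1, hv, hp⟩ := ih _ _ hh ht
      exact ⟨S1, hS1, hh1, .inl hv, .inlOpt hp⟩
  | inr _ ih =>
    intro S a hh ht
    cases ht with
    | inr ht =>
      obtain ⟨S1, hS1, hh1, hv, hp⟩ := ih _ _ hh ht
      exact ⟨S1, hS1, hh1, .inr hv, .inr hp⟩
  | caseL _ _ ih1 ih2 =>
    intro S a hh ht
    cases ht with
    | case ht ht1 ht2 =>
      obtain ⟨S1, hS1, hh1, -, hp⟩ := ih1 _ _ hh ht
      cases hp with
      | inl hp =>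
        obtain ⟨S2, hS2, hr⟩ := ih2 _ _ hh1 ((ht1.store_mono hS1).subst_zero hp)
        exact ⟨S2, hS1.trans hS2, hr⟩
    | caseOpt ht ht1 =>
      obtain ⟨S1, hS1, hh1, -, hp⟩ := ih1 _ _ hh ht
      cases hp with
      | inlOpt hp =>
        obtain ⟨S2, hS2, hr⟩ := ih2 _ _ hh1 ((ht1.store_mono hS1).subst_zero hp)
        exact ⟨S2, hS1.trans hS2, hr⟩
  | caseR _ _ ih1 ih2 =>
    intro S a hh ht
    cases ht with
    | case ht ht1 ht2 =>
      obtain ⟨S1, hS1, hh1, -, hp⟩ := ih1 _ _ hh ht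
      cases hp with
      | inr hp =>
        obtain ⟨S2, hS2, hr⟩ := ih2 _ _ hh1 ((ht2.store_mono hS1).subst_zero hp)
        exact ⟨S2, hS1.trans hS2, hr⟩
    | caseOpt ht ht1 =>
      -- The scrutinee would be a right injection of type `opt`, which no rule derives.
      obtain ⟨S1, hS1, hh1, -, hp⟩ := ih1 _ _ hh ht
      cases hp
  | new _ ih =>
    intro S a hh ht
    cases ht with
    | @new _ _ b ht =>
      obtain ⟨S1, hS1, hh1, hv, hp⟩ := ih _ _ hh ht
      refine ⟨S1 ++ [b], hS1.trans (List.prefix_append _ _), hh1.append hv hp, .loc, .loc ?_⟩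
      rw [← List.Forall₂.length_eq hh1]
      simp
  | deref _ hn ih =>
    intro S a hh ht
    cases ht with
    | deref ht =>
      obtain ⟨S1, hS1, hh1, -, hp⟩ := ih _ _ hh ht
      cases hp with
      | loc hl => exact ⟨S1, hS1, hh1, hh1.get hl hn⟩
  | assign _ _ ih1 ih2 =>
    intro S a hh ht
    cases ht with
    | assign ht1 ht2 =>
      obtain ⟨S1, hS1, hh1, -, hp⟩ := ih1 _ _ hh ht1
      obtain ⟨S2, hS2, hh2, hv, hr⟩ := ih2 _ _ hh1 (ht2.store_mono hS1)
      cases hp with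
      | loc hl =>
        exact ⟨S2, hS1.trans hS2, hh2.set (List.IsPrefix.getElem?_some hS2 hl) hv hr, .unit, .unit⟩

/-! ## STATEMENT 12: The CG-to-FG translation never produces the right injection
at translated monadic type -/

theorem cg2fg_never_inr
    {L : Type} [Lattice L] [BoundedOrder L]
    (l1 l2 : L) (τ : CGTy L) (es et : Exp) (h : Heap) (v : Exp)
    (htr : CG2FG ([] : List (CGTy L)) es (CGTy.monad l1 l2 τ) et)
    (hrun : FGEval [] (Exp.app et Exp.unit) h v) :
    ∃ v' : Exp, v = Exp.inl v' := by
  obtain ⟨S, -, -, hv, ht⟩ :=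
    hrun.preservation [] (.opt τ.erase) .nil (.app (htr.hasType []) .unit)
  cases ht with
  | inlOpt => exact ⟨_, rfl⟩
  | _ => cases hv
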